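/- (Theorem 3.4(ii), sufficient optimality for robust efficient solutions.) Suppose z̄ ∈ F satisfies the robust KKT condition (with respect to the subdifferential data S, T) and the pair (f,g) is type II pseudo convex at z̄ (with respect to S, T). Then z̄ is a robust efficient solution, i.e., for every z ∈ F one has f(z) − f(z̄) ∉ −(K \ {0}). -/

import Mathlib

/-!
Pair the KKT identity `0 = v + ∑ μᵢ uᵢ` with a feasible direction `z - z₀`. Complementary
slackness leaves only active constraints in the sum; for these, every worst-case scenario at `z₀`
has value `≥ 0`, hence dominates its value at the feasible point `z`, and pseudo convexity makes the
corresponding subgradients nonpositive at `z - z₀`, a bound that survives convex combinations and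
weak* limits. So `0 ≤ v (z - z₀)`. But if `f z - f z₀ ∈ -(K \ {0})`, then `z ≠ z₀` and the
scalarization of `f` by the KKT functional does not increase from `z₀` to `z`, so type II pseudo
convexity gives `v (z - z₀) < 0`.
-/

section ClosedConvexHull

variable {𝕜 E β : Type*} [Semiring 𝕜] [PartialOrder 𝕜] [AddCommMonoid E] [Module 𝕜 E]
  [TopologicalSpace E] [LinearOrder β] {φ : E → β} {s : Set E} {c : β} {x : E}

theorem le_of_mem_closure_convexHull (hφ : QuasiconvexOn 𝕜 Set.univ φ)
    (hφc : LowerSemicontinuous φ) (hs : ∀ y ∈ s, φ y ≤ c) (hx : x ∈ closure (convexHull 𝕜 s)) :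
    φ x ≤ c := by
  have hconvex : Convex 𝕜 {y | φ y ≤ c} := by simpa using hφ c
  exact closure_minimal (convexHull_min hs hconvex) (hφc.isClosed_preimage c) hx

end ClosedConvexHull

section WeakDual

variable {E : Type*} [AddCommMonoid E] [Module ℝ E] [TopologicalSpace E]

theorem weakDual_apply_le_of_mem_closure_convexHull {s : Set (WeakDual ℝ E)} {w : WeakDual ℝ E}
    {x : E} {c : ℝ} (hs : ∀ v ∈ s, v x ≤ c) (hw : w ∈ closure (convexHull ℝ s)) : w x ≤ c :=
  le_of_mem_closure_convexHull (φ := fun v : WeakDual ℝ E ↦ v x)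
    (((topDualPairing ℝ E).flip x).convexOn convex_univ).quasiconvexOn
    (WeakDual.eval_continuous x).lowerSemicontinuous hs hw

theorem weakDual_add_sum_smul_apply {ι : Type*} [Fintype ι] (v : WeakDual ℝ E) (μ : ι → ℝ)
    (u : ι → WeakDual ℝ E) (x : E) : (v + ∑ i, μ i • u i) x = v x + ∑ i, μ i * u i x := by
  let evalAt : WeakDual ℝ E →ₗ[ℝ] ℝ := (topDualPairing ℝ E).flip x
  change evalAt (v + ∑ i, μ i • u i) = evalAt v + ∑ i, μ i * evalAt (u i)
  simp only [map_add, map_sum, map_smul, smul_eq_mul]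

end WeakDual

section DualCone

variable {Y : Type*} [AddCommGroup Y] [Module ℝ Y] [TopologicalSpace Y]

/-- The dual cone `K⁺` of continuous linear functionals that are nonnegative on `K`. -/
def dualCone (K : Set Y) : PointedCone ℝ (Y →L[ℝ] ℝ) :=
  PointedCone.dual (topDualPairing ℝ Y).flip K

theorem apply_le_apply_of_mem_dualCone {K : Set Y} {φ : Y →L[ℝ] ℝ} (hφ : φ ∈ dualCone K)
    {a b : Y} (hab : a - b ∈ -K) : φ a ≤ φ b := by
  have h : 0 ≤ φ (-(a - b)) := hφ hab
  rwa [neg_sub, map_sub, sub_nonneg] at h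

end DualCone

section RobustConstraint

variable {Z 𝒰 : Type*}

/-- The robust feasible set `F` of a family of uncertain constraints: the points at which every
constraint holds in every scenario. -/
def robustFeasibleSet {ι : Type*} (g : ι → Z → 𝒰 → ℝ) : Set Z :=
  {z | ∀ i ω, g i z ω ≤ 0}

/-- The set `𝒰ᵢ(z)` of maximizers of `gᵢ(z, ·)`, for a single uncertain constraint `g = gᵢ`. -/
def worstCaseScenarios (g : Z → 𝒰 → ℝ) (z : Z) : Set 𝒰 :=
  {ω | ∀ ω', g z ω' ≤ g z ω}

variable [AddCommGroup Z] [Module ℝ Z] [TopologicalSpace Z]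

/-- The weak*-closed convex hull of the subgradients of a single uncertain constraint `g` at its
worst-case scenarios; `T z ω` plays the role of the limiting subdifferential of `g(·, ω)` at `z`. -/
def worstCaseSubgradients (g : Z → 𝒰 → ℝ) (T : Z → 𝒰 → Set (WeakDual ℝ Z)) (z : Z) :
    Set (WeakDual ℝ Z) :=
  closure (convexHull ℝ (⋃ ω ∈ worstCaseScenarios g z, T z ω))

/-- Pseudo convexity at `z₀` of a single uncertain constraint: condition (b), common to type I and
type II pseudo convexity. -/
def ConstraintPseudoConvexAt (g : Z → 𝒰 → ℝ) (T : Z → 𝒰 → Set (WeakDual ℝ Z)) (z₀ : Z) : Prop :=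
  ∀ z ω, g z ω ≤ g z₀ ω → ∀ w ∈ T z₀ ω, w (z - z₀) ≤ 0

namespace ConstraintPseudoConvexAt

variable {g : Z → 𝒰 → ℝ} {T : Z → 𝒰 → Set (WeakDual ℝ Z)} {z₀ z : Z} {ω₀ : 𝒰} {w : WeakDual ℝ Z}

theorem apply_sub_nonpos (hg : ConstraintPseudoConvexAt g T z₀) (hz : ∀ ω, g z ω ≤ 0)
    (hactive : 0 ≤ g z₀ ω₀) (hw : w ∈ worstCaseSubgradients g T z₀) : w (z - z₀) ≤ 0 := by
  refine weakDual_apply_le_of_mem_closure_convexHull (fun v hv ↦ ?_) hw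
  obtain ⟨ω, hω, hvω⟩ := Set.mem_iUnion₂.1 hv
  have hdecrease : g z ω ≤ g z₀ ω := calc
    g z ω ≤ 0 := hz ω
    _ ≤ g z₀ ω₀ := hactive
    _ ≤ g z₀ ω := hω ω₀
  exact hg z ω hdecrease v hvω

theorem mul_apply_sub_nonpos (hg : ConstraintPseudoConvexAt g T z₀) (hz : ∀ ω, g z ω ≤ 0)
    {μ : ℝ} (hμ : 0 ≤ μ) (hslack : μ * g z₀ ω₀ = 0) (hw : w ∈ worstCaseSubgradients g T z₀) :
    μ * w (z - z₀) ≤ 0 := by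
  obtain rfl | hactive := mul_eq_zero.1 hslack
  · rw [zero_mul]
  · exact mul_nonpos_of_nonneg_of_nonpos hμ (hg.apply_sub_nonpos hz hactive.ge hw)

end ConstraintPseudoConvexAt

end RobustConstraint

section RobustOptimality

variable {Z Y 𝒰 ι : Type*} [AddCommGroup Y]

/-- Robust efficiency of `z₀`: it is robust feasible and no robust feasible point improves on it
with respect to `K`. -/
def IsRobustEfficient (K : Set Y) (f : Z → Y) (g : ι → Z → 𝒰 → ℝ) (z₀ : Z) : Prop :=
  z₀ ∈ robustFeasibleSet g ∧ ∀ z ∈ robustFeasibleSet g, f z - f z₀ ∉ -(K \ {0})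

variable [AddCommGroup Z] [Module ℝ Z] [TopologicalSpace Z] [Module ℝ Y] [TopologicalSpace Y]

/-- Type II pseudo convexity of `(f, g)` at `z₀`; `S z φ` plays the role of the limiting
subdifferential of `φ ∘ f` at `z`. -/
structure TypeIIPseudoConvexAt (K : Set Y) (f : Z → Y) (g : ι → Z → 𝒰 → ℝ)
    (S : Z → (Y →L[ℝ] ℝ) → Set (WeakDual ℝ Z)) (T : ι → Z → 𝒰 → Set (WeakDual ℝ Z)) (z₀ : Z) :
    Prop where
  objective : ∀ z, z ≠ z₀ → ∀ φ ∈ dualCone K, φ ≠ 0 → φ (f z) ≤ φ (f z₀) →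
    ∀ v ∈ S z₀ φ, v (z - z₀) < 0
  constraint : ∀ i, ConstraintPseudoConvexAt (g i) (T i) z₀

/-- The robust KKT condition at `z₀`, with scalarizing functional `φ`, multipliers `μ`, subgradients
`v` and `u i`, and one worst-case scenario `ω i` per constraint witnessing complementary slackness.
Feasibility of `z₀` is not included. -/
def RobustKKTAt [Fintype ι] (K : Set Y) (g : ι → Z → 𝒰 → ℝ)
    (S : Z → (Y →L[ℝ] ℝ) → Set (WeakDual ℝ Z)) (T : ι → Z → 𝒰 → Set (WeakDual ℝ Z)) (z₀ : Z) :
    Prop :=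
  ∃ φ ∈ dualCone K, φ ≠ 0 ∧ ∃ μ : ι → ℝ, (∀ i, 0 ≤ μ i) ∧ ∃ v ∈ S z₀ φ,
    ∃ u : ι → WeakDual ℝ Z, (∀ i, u i ∈ worstCaseSubgradients (g i) (T i) z₀) ∧
    ∃ ω : ι → 𝒰, (∀ i, ω i ∈ worstCaseScenarios (g i) z₀) ∧
      0 = v + ∑ i, μ i • u i ∧ ∀ i, μ i * g i z₀ (ω i) = 0

theorem TypeIIPseudoConvexAt.apply_sub_neg {K : Set Y} {f : Z → Y} {g : ι → Z → 𝒰 → ℝ}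
    {S : Z → (Y →L[ℝ] ℝ) → Set (WeakDual ℝ Z)} {T : ι → Z → 𝒰 → Set (WeakDual ℝ Z)} {z₀ z : Z}
    (h : TypeIIPseudoConvexAt K f g S T z₀) {φ : Y →L[ℝ] ℝ} (hφ : φ ∈ dualCone K) (hφ0 : φ ≠ 0)
    {v : WeakDual ℝ Z} (hv : v ∈ S z₀ φ) (hz : f z - f z₀ ∈ -(K \ {0})) : v (z - z₀) < 0 := by
  have hne : z ≠ z₀ := by
    rintro rfl
    exact hz.2 (by simp)
  exact h.objective z hne φ hφ hφ0 (apply_le_apply_of_mem_dualCone hφ hz.1) v hv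

theorem sufficient_optimality_robust_efficient_general [Fintype ι] {K : Set Y} {f : Z → Y}
    {g : ι → Z → 𝒰 → ℝ} {S : Z → (Y →L[ℝ] ℝ) → Set (WeakDual ℝ Z)}
    {T : ι → Z → 𝒰 → Set (WeakDual ℝ Z)} {z₀ : Z} (hz₀ : z₀ ∈ robustFeasibleSet g)
    (hKKT : RobustKKTAt K g S T z₀) (hfg : TypeIIPseudoConvexAt K f g S T z₀) :
    IsRobustEfficient K f g z₀ := by
  refine ⟨hz₀, fun z hz hdominates ↦ ?_⟩
  obtain ⟨φ, hφ, hφ0, μ, hμ, v, hv, u, hu, ω, -, hstationary, hslack⟩ := hKKT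
  have hobjective : v (z - z₀) < 0 := hfg.apply_sub_neg hφ hφ0 hv hdominates
  have hconstraints : ∑ i, μ i * u i (z - z₀) ≤ 0 := Finset.sum_nonpos fun i _ ↦
    (hfg.constraint i).mul_apply_sub_nonpos (hz i) (hμ i) (hslack i) (hu i)
  have hpaired : 0 = v (z - z₀) + ∑ i, μ i * u i (z - z₀) := by
    rw [← weakDual_add_sum_smul_apply, ← hstationary]
    rfl
  linarith

end RobustOptimality

theorem sufficient_optimality_robust_efficient
    {Z Y : Type*} [NormedAddCommGroup Z] [NormedSpace ℝ Z]
    [NormedAddCommGroup Y] [NormedSpace ℝ Y]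
    (K : Set Y) (hKconvex : Convex ℝ K)
    (hKcone : ∀ (c : ℝ), 0 < c → ∀ y ∈ K, c • y ∈ K)
    (hKpointed : K ∩ (-K) = {0})
    {𝒰 : Type*} [Nonempty 𝒰]
    (n : ℕ) (hn : 0 < n)
    (g : Fin n → Z → 𝒰 → ℝ)
    (f : Z → Y)
    -- subdifferential data
    (S : Z → (Y →L[ℝ] ℝ) → Set (WeakDual ℝ Z))
    (T : Fin n → Z → 𝒰 → Set (WeakDual ℝ Z))
    -- the reference point, robust feasible
    (zbar : Z) (hzbarF : ∀ i : Fin n, ∀ u : 𝒰, g i zbar u ≤ 0)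
    -- robust KKT condition at zbar
    (y' : Y →L[ℝ] ℝ) (hy'K : ∀ k ∈ K, 0 ≤ y' k) (hy'0 : y' ≠ 0)
    (μ : Fin n → ℝ) (hμ : ∀ i, 0 ≤ μ i)
    (v' : WeakDual ℝ Z) (hv' : v' ∈ S zbar y')
    (u' : Fin n → WeakDual ℝ Z)
    (hu' : ∀ i, u' i ∈
      closure (convexHull ℝ (⋃ u ∈ {u : 𝒰 | ∀ u', g i zbar u' ≤ g i zbar u}, T i zbar u)))
    (ubar : Fin n → 𝒰) (hubar : ∀ i, ∀ u', g i zbar u' ≤ g i zbar (ubar i))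
    (hKKT : (0 : WeakDual ℝ Z) = v' + ∑ i, μ i • u' i)
    (hcomp : ∀ i, μ i * g i zbar (ubar i) = 0)
    -- (f, g) is type II pseudo convex at zbar
    (hpcII_a : ∀ z : Z, z ≠ zbar → ∀ w : Y →L[ℝ] ℝ, (∀ k ∈ K, 0 ≤ w k) → w ≠ 0 →
      w (f z) ≤ w (f zbar) → ∀ v ∈ S zbar w, v (z - zbar) < 0)
    (hpcII_b : ∀ z : Z, ∀ u : 𝒰, ∀ i : Fin n, g i z u ≤ g i zbar u →
      ∀ w ∈ T i zbar u, w (z - zbar) ≤ 0)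
 :
    -- zbar is a robust efficient solution
    ∀ z : Z, (∀ i : Fin n, ∀ u : 𝒰, g i z u ≤ 0) →
      f z - f zbar ∉ -(K \ {0}) := by
  exact (sufficient_optimality_robust_efficient_general hzbarF
    ⟨y', @hy'K, hy'0, μ, hμ, v', hv', u', hu', ubar, hubar, hKKT, hcomp⟩
    ⟨fun z hz w hw ↦ hpcII_a z hz w @hw, fun i z u ↦ hpcII_b z u i⟩).2
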